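/- Let μ, ν be real numbers with 0 < ν < μ and let Q : ℝ → ℝ be given by Q(x) = sinh(νx)/sinh(μx) for x ≠ 0 and Q(0) = ν/μ. Then Q(x) > 0 for all x, and for all real numbers x₁ < x₂ and y₁ < y₂ one has Q(x₁ − y₁)·Q(x₂ − y₂) − Q(x₁ − y₂)·Q(x₂ − y₁) ≥ 0; moreover the inequality is strict whenever the open intervals (x₁, x₂) and (y₁, y₂) intersect. (That is, Q belongs to the continuous class PF(2).) -/

import Mathlib

open Real

/-!
A positive function has strictly positive `2×2` minors as soon as its logarithm is strictly concave:
`x₁ - y₁` and `x₂ - y₂` lie strictly between `x₁ - y₂` and `x₂ - y₁`, and the two pairs have the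
same sum. Writing `sinhc x = sinh x / x`, we have
`log Q(x) = log (ν / μ) + g(νx) - g(μx)` with `g = log ∘ sinhc`, whose derivative is the Langevin
function `ℒ(x) = coth x - 1 / x`. By scaling, `log Q` decreases on `[0, ∞)` because
`x ℒ(x) = x coth x - 1` increases there, and it is concave on `[0, ∞)` because
`x² ℒ'(x) = 1 - (x / sinh x)²` increases there. As `Q` is even and `log Q` is decreasing on
`[0, ∞)`, concavity extends to `ℝ`.
-/

section Concavity

theorem add_lt_add_of_strictConcaveOn {𝕜 : Type*} [Field 𝕜] [LinearOrder 𝕜] [IsStrictOrderedRing 𝕜]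
    {s : Set 𝕜} {f : 𝕜 → 𝕜} (hf : StrictConcaveOn 𝕜 s f) {a b c d : 𝕜} (ha : a ∈ s) (hb : b ∈ s)
    (hac : a < c) (hcb : c < b) (hsum : c + d = a + b) : f a + f b < f c + f d := by
  have hab : 0 < b - a := sub_pos.2 (hac.trans hcb)
  obtain ⟨u, v, hu, hv, huv, rfl⟩ : ∃ u v : 𝕜, 0 < u ∧ 0 < v ∧ u + v = 1 ∧ u • a + v • b = c := by
    refine ⟨(b - c) / (b - a), (c - a) / (b - a), div_pos (sub_pos.2 hcb) hab,
      div_pos (sub_pos.2 hac) hab, ?_, ?_⟩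
    · field_simp
      ring
    · simp only [smul_eq_mul]
      field_simp
      ring
  obtain rfl : v • a + u • b = d := by
    simp only [smul_eq_mul] at hsum ⊢
    linear_combination (a + b) * huv - hsum
  have hne : a ≠ b := (hac.trans hcb).ne
  calc f a + f b = (u • f a + v • f b) + (v • f a + u • f b) := by
        simp only [smul_eq_mul]
        linear_combination -(f a + f b) * huv
    _ < f (u • a + v • b) + f (v • a + u • b) :=
        add_lt_add (hf.2 ha hb hne hu hv huv) (hf.2 ha hb hne hv hu (by rwa [add_comm]))

theorem mul_lt_mul_of_strictConcaveOn_log {Q : ℝ → ℝ} (hpos : ∀ x, 0 < Q x)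
    (hlog : StrictConcaveOn ℝ Set.univ fun x ↦ log (Q x)) {x₁ x₂ y₁ y₂ : ℝ} (hx : x₁ < x₂)
    (hy : y₁ < y₂) : Q (x₁ - y₂) * Q (x₂ - y₁) < Q (x₁ - y₁) * Q (x₂ - y₂) := by
  rw [← log_lt_log_iff (mul_pos (hpos _) (hpos _)) (mul_pos (hpos _) (hpos _)),
    log_mul (hpos _).ne' (hpos _).ne', log_mul (hpos _).ne' (hpos _).ne']
  exact add_lt_add_of_strictConcaveOn hlog (Set.mem_univ _) (Set.mem_univ _)
    (sub_lt_sub_left hy _) (sub_lt_sub_right hx _) (by ring)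

theorem strictConcaveOn_comp_norm {E : Type*} [NormedAddCommGroup E] [NormedSpace ℝ E]
    [StrictConvexSpace ℝ E] {f : ℝ → ℝ} (hf : StrictConcaveOn ℝ (Set.Ici 0) f)
    (hanti : StrictAntiOn f (Set.Ici 0)) : StrictConcaveOn ℝ Set.univ fun x : E ↦ f ‖x‖ := by
  refine ⟨convex_univ, fun x _ y _ hxy a b ha hb hab ↦ ?_⟩
  rcases eq_or_ne ‖x‖ ‖y‖ with hnorm | hnorm
  · calc a • f ‖x‖ + b • f ‖y‖ = f ‖y‖ := by rw [hnorm, ← add_smul, hab, one_smul]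
      _ < f ‖a • x + b • y‖ := hanti (norm_nonneg _) (norm_nonneg _)
          (norm_combo_lt_of_ne hnorm.le le_rfl hxy ha hb hab)
  · have hle : ‖a • x + b • y‖ ≤ a • ‖x‖ + b • ‖y‖ :=
      convexOn_univ_norm.2 trivial trivial ha.le hb.le hab
    calc a • f ‖x‖ + b • f ‖y‖ < f (a • ‖x‖ + b • ‖y‖) :=
          hf.2 (norm_nonneg x) (norm_nonneg y) hnorm ha hb hab
      _ ≤ f ‖a • x + b • y‖ :=
          hanti.antitoneOn (norm_nonneg _) ((norm_nonneg _).trans hle) hle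

end Concavity

section Scaling

variable {g g' g'' : ℝ → ℝ} {μ ν : ℝ}

theorem hasDerivAt_comp_const_mul {c d x : ℝ} (hg : HasDerivAt g d (c * x)) :
    HasDerivAt (fun x ↦ g (c * x)) (c * d) x := by
  simpa only [mul_comm] using! hg.comp x (hasDerivAt_const_mul c)

theorem hasDerivAt_comp_mul_sub_comp_mul (hg : ∀ x, 0 < x → HasDerivAt g (g' x) x) (hν : 0 < ν)
    (hμ : 0 < μ) {x : ℝ} (hx : 0 < x) :
    HasDerivAt (fun x ↦ g (ν * x) - g (μ * x)) (ν * g' (ν * x) - μ * g' (μ * x)) x :=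
  (hasDerivAt_comp_const_mul (hg _ (mul_pos hν hx))).sub
    (hasDerivAt_comp_const_mul (hg _ (mul_pos hμ hx)))

theorem continuousOn_comp_mul_sub_comp_mul (hcont : ContinuousOn g (Set.Ici 0)) (hν : 0 ≤ ν)
    (hμ : 0 ≤ μ) : ContinuousOn (fun x ↦ g (ν * x) - g (μ * x)) (Set.Ici 0) :=
  (hcont.comp (by fun_prop) fun _ hx ↦ mul_nonneg hν hx).sub
    (hcont.comp (by fun_prop) fun _ hx ↦ mul_nonneg hμ hx)

theorem strictAntiOn_comp_mul_sub_comp_mul (hcont : ContinuousOn g (Set.Ici 0))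
    (hg : ∀ x, 0 < x → HasDerivAt g (g' x) x)
    (hmono : StrictMonoOn (fun x ↦ x * g' x) (Set.Ioi 0)) (hν : 0 < ν) (hνμ : ν < μ) :
    StrictAntiOn (fun x ↦ g (ν * x) - g (μ * x)) (Set.Ici 0) := by
  have hμ : 0 < μ := hν.trans hνμ
  refine strictAntiOn_of_deriv_neg (convex_Ici 0)
    (continuousOn_comp_mul_sub_comp_mul hcont hν.le hμ.le) fun x hx ↦ ?_
  rw [interior_Ici, Set.mem_Ioi] at hx
  have hlt : ν * x * g' (ν * x) < μ * x * g' (μ * x) :=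
    hmono (mul_pos hν hx) (mul_pos hμ hx) (mul_lt_mul_of_pos_right hνμ hx)
  rw [(hasDerivAt_comp_mul_sub_comp_mul hg hν hμ hx).deriv, sub_neg]
  refine lt_of_mul_lt_mul_left ?_ hx.le
  linarith

theorem strictConcaveOn_comp_mul_sub_comp_mul (hcont : ContinuousOn g (Set.Ici 0))
    (hg : ∀ x, 0 < x → HasDerivAt g (g' x) x) (hg' : ∀ x, 0 < x → HasDerivAt g' (g'' x) x)
    (hmono : StrictMonoOn (fun x ↦ x ^ 2 * g'' x) (Set.Ioi 0)) (hν : 0 < ν) (hνμ : ν < μ) :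
    StrictConcaveOn ℝ (Set.Ici 0) fun x ↦ g (ν * x) - g (μ * x) := by
  have hμ : 0 < μ := hν.trans hνμ
  refine strictConcaveOn_of_deriv2_neg (convex_Ici 0)
    (continuousOn_comp_mul_sub_comp_mul hcont hν.le hμ.le) fun x hx ↦ ?_
  rw [interior_Ici, Set.mem_Ioi] at hx
  have hderiv : deriv (fun x ↦ g (ν * x) - g (μ * x)) =ᶠ[nhds x]
      fun x ↦ ν * g' (ν * x) - μ * g' (μ * x) := by
    filter_upwards [lt_mem_nhds hx] with y hy
    exact (hasDerivAt_comp_mul_sub_comp_mul hg hν hμ hy).deriv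
  have hscale {c : ℝ} (hc : 0 < c) :
      HasDerivAt (fun x ↦ c * g' (c * x)) (c * (c * g'' (c * x))) x :=
    (hasDerivAt_comp_const_mul (hg' _ (mul_pos hc hx))).const_mul c
  have hlt : (ν * x) ^ 2 * g'' (ν * x) < (μ * x) ^ 2 * g'' (μ * x) :=
    hmono (mul_pos hν hx) (mul_pos hμ hx) (mul_lt_mul_of_pos_right hνμ hx)
  rw [Function.iterate_succ_apply, Function.iterate_one, hderiv.deriv_eq,
    ((hscale hν).fun_sub (hscale hμ)).deriv, sub_neg]
  refine lt_of_mul_lt_mul_left ?_ (sq_nonneg x)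
  linarith

end Scaling

section Hyperbolic

theorem strictConvexOn_sinh : StrictConvexOn ℝ (Set.Ici 0) sinh := by
  refine StrictMonoOn.strictConvexOn_of_deriv (convex_Ici 0) continuous_sinh.continuousOn ?_
  rw [Real.deriv_sinh]
  exact cosh_strictMonoOn.mono interior_subset

theorem strictMonoOn_sinh_div_self : StrictMonoOn (fun x ↦ sinh x / x) (Set.Ioi 0) := by
  intro x hx y hy hxy
  simpa using strictConvexOn_sinh.secant_strict_mono Set.self_mem_Ici (Set.Ioi_subset_Ici_self hx)
    (Set.Ioi_subset_Ici_self hy) (ne_of_gt hx) (ne_of_gt hy) hxy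

theorem self_lt_sinh_mul_cosh {x : ℝ} (hx : 0 < x) : x < sinh x * cosh x :=
  (self_lt_sinh_iff.2 hx).trans
    (lt_mul_of_one_lt_right (sinh_pos_iff.2 hx) (one_lt_cosh.2 hx.ne'))

theorem hasDerivAt_cosh_div_sinh {x : ℝ} (hx : x ≠ 0) :
    HasDerivAt (fun x ↦ cosh x / sinh x) (-(1 / sinh x ^ 2)) x := by
  refine ((hasDerivAt_cosh x).div (hasDerivAt_sinh x) (sinh_ne_zero.2 hx)).congr_deriv ?_
  rw [← neg_div, ← cosh_sq_sub_sinh_sq x]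
  ring

theorem strictMonoOn_mul_cosh_div_sinh :
    StrictMonoOn (fun x ↦ x * (cosh x / sinh x)) (Set.Ioi 0) := by
  have hderiv {x : ℝ} (hx : x ∈ Set.Ioi (0 : ℝ)) :=
    (hasDerivAt_id' x).fun_mul (hasDerivAt_cosh_div_sinh (ne_of_gt hx))
  refine strictMonoOn_of_deriv_pos (convex_Ioi 0)
    (fun x hx ↦ (hderiv hx).continuousAt.continuousWithinAt) fun x hx ↦ ?_
  rw [interior_Ioi] at hx
  have hsinh : 0 < sinh x := sinh_pos_iff.2 hx
  rw [(hderiv hx).deriv]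
  calc 0 < (sinh x * cosh x - x) / sinh x ^ 2 :=
        div_pos (sub_pos.2 (self_lt_sinh_mul_cosh hx)) (by positivity)
    _ = 1 * (cosh x / sinh x) + x * -(1 / sinh x ^ 2) := by
        field_simp
        ring

end Hyperbolic

/-- The hyperbolic analogue of `Real.sinc`: the function `sinh x / x`, extended continuously by the
value `1` at `0`. -/
noncomputable def sinhc (x : ℝ) : ℝ := if x = 0 then 1 else sinh x / x

@[simp]
theorem sinhc_zero : sinhc 0 = 1 := by simp [sinhc]

theorem sinhc_of_ne_zero {x : ℝ} (hx : x ≠ 0) : sinhc x = sinh x / x := by simp [sinhc, hx]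

theorem sinhc_eq_dslope : sinhc = dslope sinh 0 := by
  ext
  simp [dslope, Function.update_apply, sinhc, slope, div_eq_inv_mul]

theorem mul_sinhc (x : ℝ) : x * sinhc x = sinh x := by
  simpa [sinhc_eq_dslope] using sub_smul_dslope sinh 0 x

theorem sinhc_neg (x : ℝ) : sinhc (-x) = sinhc x := by
  simp [sinhc, neg_div_neg_eq]

theorem sinhc_mul_abs (c x : ℝ) : sinhc (c * |x|) = sinhc (c * x) := by
  rcases abs_choice x with h | h <;> simp [h, sinhc_neg]

theorem sinhc_pos (x : ℝ) : 0 < sinhc x := by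
  rcases lt_trichotomy x 0 with hx | rfl | hx
  · rw [sinhc_of_ne_zero hx.ne]
    exact div_pos_of_neg_of_neg (sinh_neg_iff.2 hx) hx
  · simp
  · rw [sinhc_of_ne_zero hx.ne']
    exact div_pos (sinh_pos_iff.2 hx) hx

theorem continuous_sinhc : Continuous sinhc := by
  rw [sinhc_eq_dslope, ← continuousOn_univ, continuousOn_dslope Filter.univ_mem]
  exact ⟨continuous_sinh.continuousOn, differentiable_sinh 0⟩

theorem continuous_log_sinhc : Continuous fun x ↦ log (sinhc x) :=
  continuous_sinhc.log fun x ↦ (sinhc_pos x).ne'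

/-- The Langevin function `coth x - 1 / x`, the logarithmic derivative of `sinhc`. -/
noncomputable def langevin (x : ℝ) : ℝ := cosh x / sinh x - x⁻¹

theorem hasDerivAt_log_sinhc {x : ℝ} (hx : x ≠ 0) :
    HasDerivAt (fun x ↦ log (sinhc x)) (langevin x) x := by
  refine (((hasDerivAt_sinh x).log (sinh_ne_zero.2 hx)).sub
    (hasDerivAt_log hx)).congr_of_eventuallyEq ?_
  filter_upwards [eventually_ne_nhds hx] with y hy
  rw [sinhc_of_ne_zero hy, log_div (sinh_ne_zero.2 hy) hy, Pi.sub_apply]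

theorem hasDerivAt_langevin {x : ℝ} (hx : x ≠ 0) :
    HasDerivAt langevin ((x ^ 2)⁻¹ - 1 / sinh x ^ 2) x :=
  ((hasDerivAt_cosh_div_sinh hx).sub (hasDerivAt_inv hx)).congr_deriv (by ring)

theorem strictMonoOn_mul_langevin : StrictMonoOn (fun x ↦ x * langevin x) (Set.Ioi 0) := by
  refine (strictMonoOn_mul_cosh_div_sinh.add_const (-1)).congr fun x hx ↦ ?_
  rw [langevin, mul_sub, mul_inv_cancel₀ (Set.mem_Ioi.1 hx).ne', sub_eq_add_neg]

theorem strictMonoOn_sq_mul_deriv_langevin :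
    StrictMonoOn (fun x ↦ x ^ 2 * ((x ^ 2)⁻¹ - 1 / sinh x ^ 2)) (Set.Ioi 0) := by
  have heq {x : ℝ} (hx : 0 < x) :
      x ^ 2 * ((x ^ 2)⁻¹ - 1 / sinh x ^ 2) = 1 - ((sinh x / x) ^ 2)⁻¹ := by
    field_simp
  intro x hx y hy hxy
  have hpos : 0 < sinh x / x := div_pos (sinh_pos_iff.2 hx) hx
  have hlt : sinh x / x < sinh y / y := strictMonoOn_sinh_div_self hx hy hxy
  simp only [heq hx, heq hy]
  gcongr

/-- The function `sinh (ν x) / sinh (μ x)`, extended by the value `ν / μ` at `0`, which makes it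
continuous when `μ ≠ 0`. -/
noncomputable def sinhRatio (μ ν x : ℝ) : ℝ :=
  if x = 0 then ν / μ else sinh (ν * x) / sinh (μ * x)

section SinhRatio

variable {μ ν : ℝ}

theorem sinhRatio_eq_mul_sinhc_div_sinhc (μ ν x : ℝ) :
    sinhRatio μ ν x = ν / μ * (sinhc (ν * x) / sinhc (μ * x)) := by
  rcases eq_or_ne x 0 with rfl | hx
  · simp [sinhRatio]
  · rw [sinhRatio, if_neg hx, ← mul_sinhc (ν * x), ← mul_sinhc (μ * x), mul_div_mul_comm,
      mul_div_mul_right _ _ hx]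

theorem sinhRatio_pos (hν : 0 < ν) (hμ : 0 < μ) (x : ℝ) : 0 < sinhRatio μ ν x := by
  rw [sinhRatio_eq_mul_sinhc_div_sinhc]
  exact mul_pos (div_pos hν hμ) (div_pos (sinhc_pos _) (sinhc_pos _))

theorem log_sinhRatio (hν : ν ≠ 0) (hμ : μ ≠ 0) (x : ℝ) :
    log (sinhRatio μ ν x) = log (sinhc (ν * x)) - log (sinhc (μ * x)) + log (ν / μ) := by
  have hne (y : ℝ) : sinhc y ≠ 0 := (sinhc_pos y).ne'
  rw [sinhRatio_eq_mul_sinhc_div_sinhc, log_mul (div_ne_zero hν hμ) (div_ne_zero (hne _) (hne _)),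
    log_div (hne _) (hne _), add_comm]

theorem strictConcaveOn_log_sinhc_sub_log_sinhc (hν : 0 < ν) (hνμ : ν < μ) :
    StrictConcaveOn ℝ Set.univ fun x ↦ log (sinhc (ν * x)) - log (sinhc (μ * x)) := by
  have hcont := continuous_log_sinhc.continuousOn (s := Set.Ici 0)
  have hderiv (x : ℝ) (hx : 0 < x) := hasDerivAt_log_sinhc hx.ne'
  have hconc := strictConcaveOn_comp_mul_sub_comp_mul hcont hderiv
    (fun x hx ↦ hasDerivAt_langevin hx.ne') strictMonoOn_sq_mul_deriv_langevin hν hνμ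
  have hanti := strictAntiOn_comp_mul_sub_comp_mul hcont hderiv strictMonoOn_mul_langevin hν hνμ
  simpa only [norm_eq_abs, sinhc_mul_abs] using strictConcaveOn_comp_norm (E := ℝ) hconc hanti

theorem strictConcaveOn_log_sinhRatio (hν : 0 < ν) (hνμ : ν < μ) :
    StrictConcaveOn ℝ Set.univ fun x ↦ log (sinhRatio μ ν x) := by
  simp only [log_sinhRatio hν.ne' (hν.trans hνμ).ne']
  exact (strictConcaveOn_log_sinhc_sub_log_sinhc hν hνμ).add_const _

end SinhRatio

theorem sinh_ratio_PF2_general (μ ν : ℝ) (hν : 0 < ν) (hνμ : ν < μ)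
    (Q : ℝ → ℝ)
    (hQ : ∀ x : ℝ, Q x = if x = 0 then ν / μ else Real.sinh (ν * x) / Real.sinh (μ * x)) :
    (∀ x : ℝ, 0 < Q x) ∧
    (∀ x₁ x₂ y₁ y₂ : ℝ, x₁ < x₂ → y₁ < y₂ →
      0 < Q (x₁ - y₁) * Q (x₂ - y₂) - Q (x₁ - y₂) * Q (x₂ - y₁)) := by
  obtain rfl : Q = sinhRatio μ ν := funext hQ
  have hpos : ∀ x, 0 < sinhRatio μ ν x := sinhRatio_pos hν (hν.trans hνμ)
  exact ⟨hpos, fun _ _ _ _ hx hy ↦ sub_pos.2 <|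
    mul_lt_mul_of_strictConcaveOn_log hpos (strictConcaveOn_log_sinhRatio hν hνμ) hx hy⟩

/-- For `0 < ν < μ`, the function `Q(x) = sinh(νx)/sinh(μx)` (with `Q(0) = ν/μ`)
is positive and belongs to the continuous class `PF(2)`: the `2×2` "minors"
`Q(x₁−y₁)Q(x₂−y₂) − Q(x₁−y₂)Q(x₂−y₁)` are nonnegative for `x₁ < x₂`, `y₁ < y₂`,
and strictly positive whenever the intervals `(x₁,x₂)` and `(y₁,y₂)` intersect. -/
theorem sinh_ratio_PF2 (μ ν : ℝ) (hν : 0 < ν) (hνμ : ν < μ)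
    (Q : ℝ → ℝ)
    (hQ : ∀ x : ℝ, Q x = if x = 0 then ν / μ else Real.sinh (ν * x) / Real.sinh (μ * x)) :
    (∀ x : ℝ, 0 < Q x) ∧
    (∀ x₁ x₂ y₁ y₂ : ℝ, x₁ < x₂ → y₁ < y₂ →
      0 ≤ Q (x₁ - y₁) * Q (x₂ - y₂) - Q (x₁ - y₂) * Q (x₂ - y₁)) ∧
    (∀ x₁ x₂ y₁ y₂ : ℝ, x₁ < x₂ → y₁ < y₂ →
      (Set.Ioo x₁ x₂ ∩ Set.Ioo y₁ y₂).Nonempty →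
      0 < Q (x₁ - y₁) * Q (x₂ - y₂) - Q (x₁ - y₂) * Q (x₂ - y₁)) := by
  obtain ⟨hpos, hminor⟩ := sinh_ratio_PF2_general μ ν hν hνμ Q hQ
  exact ⟨hpos, fun x₁ x₂ y₁ y₂ hx hy ↦ (hminor x₁ x₂ y₁ y₂ hx hy).le,
    fun x₁ x₂ y₁ y₂ hx hy _ ↦ hminor x₁ x₂ y₁ y₂ hx hy⟩
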